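/- Let n ≥ 3 and K ≥ 1 be integers and let M ∈ SL_n(ℤ) be a row matrix or a column matrix all of whose entries lie in {−K+1, …, 0, …, K−1}. Then M can be written as a product of at most 1200·n·ln K + 400·n elements of {A_n, A_n⁻¹, B_n, B_n⁻¹}. -/

import Mathlib

/-- The matrix `A_n`: 1's on the diagonal, an additional 1 in the (1,2) entry
(zero-indexed: (0,1)), and 0's elsewhere. -/
def Amat (n : ℕ) : Matrix (Fin n) (Fin n) ℤ :=
  Matrix.of fun i j => if i = j then 1 else if (i : ℕ) = 0 ∧ (j : ℕ) = 1 then 1 else 0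

/-- The matrix `B_n`: 1 in each entry (i, i+1), (−1)^(n−1) in the (n,1) entry
(zero-indexed: (n-1,0)), and 0's elsewhere. -/
def Bmat (n : ℕ) : Matrix (Fin n) (Fin n) ℤ :=
  Matrix.of fun i j => if (j : ℕ) = (i : ℕ) + 1 then 1
    else if (i : ℕ) = n - 1 ∧ (j : ℕ) = 0 then (-1 : ℤ) ^ (n - 1) else 0

/-- A row matrix: all diagonal entries are 1 and it differs from the identity only in
one row. -/
def IsRowMatrix {n : ℕ} (M : Matrix (Fin n) (Fin n) ℤ) : Prop :=
  (∀ i, M i i = 1) ∧ ∃ r : Fin n, ∀ i j, i ≠ r → i ≠ j → M i j = 0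

/-- A column matrix: all diagonal entries are 1 and it differs from the identity only
in one column. -/
def IsColumnMatrix {n : ℕ} (M : Matrix (Fin n) (Fin n) ℤ) : Prop :=
  (∀ i, M i i = 1) ∧ ∃ c : Fin n, ∀ i j, j ≠ c → i ≠ j → M i j = 0

open Matrix

/-- `M` is the matrix of a product of at most `L` elements of `{A, A⁻¹, B, B⁻¹}`. -/
def HasWord {n : ℕ} (A B : SpecialLinearGroup (Fin n) ℤ) (L : ℕ)
    (M : Matrix (Fin n) (Fin n) ℤ) : Prop :=
  ∃ l : List (SpecialLinearGroup (Fin n) ℤ), l.length ≤ L ∧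
    (∀ x ∈ l, x = A ∨ x = A⁻¹ ∨ x = B ∨ x = B⁻¹) ∧ l.prod.1 = M

/-- The standard basis vector with a `1` at position `k` (and zero if `n ≤ k`). -/
def unitVec (n k : ℕ) : Fin n → ℤ := fun i => if (i : ℕ) = k then 1 else 0

section Words

variable {n : ℕ} {A B : SpecialLinearGroup (Fin n) ℤ}

lemma HasWord.mono {L L' : ℕ} {M : Matrix (Fin n) (Fin n) ℤ} (h : HasWord A B L M)
    (hL : L ≤ L') : HasWord A B L' M :=
  let ⟨l, hl, h⟩ := h
  ⟨l, hl.trans hL, h⟩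

lemma HasWord.one : HasWord A B 0 (1 : Matrix (Fin n) (Fin n) ℤ) := ⟨[], by simp⟩

lemma HasWord.left : HasWord A B 1 A.1 := ⟨[A], by simp⟩

lemma HasWord.right : HasWord A B 1 B.1 := ⟨[B], by simp⟩

lemma HasWord.mul {L L' : ℕ} {M N : Matrix (Fin n) (Fin n) ℤ} (hM : HasWord A B L M)
    (hN : HasWord A B L' N) : HasWord A B (L + L') (M * N) := by
  obtain ⟨l, hl, hl', rfl⟩ := hM
  obtain ⟨k, hk, hk', rfl⟩ := hN
  refine ⟨l ++ k, by simp; omega, fun x hx => ?_, by simp⟩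
  rcases List.mem_append.1 hx with h | h
  exacts [hl' x h, hk' x h]

lemma HasWord.exists_eq {L : ℕ} {M : Matrix (Fin n) (Fin n) ℤ} (hM : HasWord A B L M) :
    ∃ g : SpecialLinearGroup (Fin n) ℤ, g.1 = M :=
  let ⟨l, _, _, h⟩ := hM
  ⟨l.prod, h⟩

lemma HasWord.inv {L : ℕ} {g : SpecialLinearGroup (Fin n) ℤ} (h : HasWord A B L g.1) :
    HasWord A B L (g⁻¹).1 := by
  obtain ⟨l, hl, hl', h⟩ := h
  obtain rfl : l.prod = g := Subtype.ext h
  refine ⟨(l.map fun x => x⁻¹).reverse, by simpa, fun x hx => ?_, ?_⟩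
  · simp only [List.mem_reverse, List.mem_map] at hx
    obtain ⟨y, hy, rfl⟩ := hx
    rcases hl' y hy with rfl | rfl | rfl | rfl <;> simp
  · rw [List.prod_inv_reverse]

lemma SpecialLinearGroup.mul_inv_val (g : SpecialLinearGroup (Fin n) ℤ) :
    g.1 * (g⁻¹).1 = 1 :=
  congrArg Subtype.val (mul_inv_cancel g)

lemma SpecialLinearGroup.inv_mul_val (g : SpecialLinearGroup (Fin n) ℤ) :
    (g⁻¹).1 * g.1 = 1 :=
  congrArg Subtype.val (inv_mul_cancel g)

lemma conj_one_add_vecMulVec (g : SpecialLinearGroup (Fin n) ℤ) (p v : Fin n → ℤ) :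
    g.1 * (1 + vecMulVec p (v ᵥ* g.1)) * (g⁻¹).1 = 1 + vecMulVec (g.1 *ᵥ p) v := by
  rw [mul_add, add_mul, mul_one, SpecialLinearGroup.mul_inv_val, mul_vecMulVec, vecMulVec_mul,
    vecMul_vecMul, SpecialLinearGroup.mul_inv_val, vecMul_one]

lemma inv_mulVec_of_mulVec_eq {g : SpecialLinearGroup (Fin n) ℤ} {p q : Fin n → ℤ}
    (h : g.1 *ᵥ p = q) : (g⁻¹).1 *ᵥ q = p := by
  rw [← h, mulVec_mulVec, SpecialLinearGroup.inv_mul_val, one_mulVec]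

lemma vecMul_inv_of_vecMul_eq {g : SpecialLinearGroup (Fin n) ℤ} {v w : Fin n → ℤ}
    (h : v ᵥ* g.1 = w) : w ᵥ* (g⁻¹).1 = v := by
  rw [← h, vecMul_vecMul, SpecialLinearGroup.mul_inv_val, vecMul_one]

lemma HasWord.conj {L L' : ℕ} {g : SpecialLinearGroup (Fin n) ℤ} {p q v w : Fin n → ℤ}
    (hg : HasWord A B L g.1) (h : HasWord A B L' (1 + vecMulVec p w))
    (hp : g.1 *ᵥ p = q) (hv : v ᵥ* g.1 = w) :
    HasWord A B (L' + 2 * L) (1 + vecMulVec q v) := by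
  subst hp hv
  rw [← conj_one_add_vecMulVec]
  exact ((hg.mul h).mul hg.inv).mono (by omega)

lemma one_add_vecMulVec_mul {p q v w : Fin n → ℤ} (h : v ⬝ᵥ q = 0) :
    (1 + vecMulVec p v) * (1 + vecMulVec q w) = 1 + vecMulVec p v + vecMulVec q w := by
  rw [mul_add, add_mul, add_mul, vecMulVec_mul_vecMulVec, h]
  simp

lemma HasWord.add_left {L L' : ℕ} {p q v : Fin n → ℤ}
    (hp : HasWord A B L (1 + vecMulVec p v)) (hq : HasWord A B L' (1 + vecMulVec q v))
    (h : v ⬝ᵥ q = 0) : HasWord A B (L + L') (1 + vecMulVec (p + q) v) := by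
  have := hp.mul hq
  rwa [one_add_vecMulVec_mul h, add_assoc, ← add_vecMulVec] at this

lemma HasWord.add_right {L L' : ℕ} {p v w : Fin n → ℤ}
    (hv : HasWord A B L (1 + vecMulVec p v)) (hw : HasWord A B L' (1 + vecMulVec p w))
    (h : v ⬝ᵥ p = 0) : HasWord A B (L + L') (1 + vecMulVec p (v + w)) := by
  have := hv.mul hw
  rwa [one_add_vecMulVec_mul h, add_assoc, ← vecMulVec_add] at this

lemma HasWord.neg {L : ℕ} {p v : Fin n → ℤ}
    (hv : HasWord A B L (1 + vecMulVec p v)) (h : v ⬝ᵥ p = 0) :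
    HasWord A B L (1 + vecMulVec (-p) v) := by
  obtain ⟨g, hg⟩ := hv.exists_eq
  rw [← hg] at hv
  convert hv.inv using 1
  have h2 : g.1 * (1 + vecMulVec (-p) v) = 1 := by
    rw [hg, one_add_vecMulVec_mul (by simp [h]), neg_vecMulVec]
    simp
  calc _ = ((g⁻¹).1 * g.1) * (1 + vecMulVec (-p) v) := by
          rw [SpecialLinearGroup.inv_mul_val, one_mul]
    _ = _ := by rw [mul_assoc, h2, mul_one]

end Words

section UnitVec

variable {n : ℕ}

lemma unitVec_eq_single {k : ℕ} (h : k < n) : unitVec n k = Pi.single ⟨k, h⟩ 1 := by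
  ext i
  simp [unitVec, Pi.single_apply, Fin.ext_iff]

lemma mulVec_unitVec (M : Matrix (Fin n) (Fin n) ℤ) {k : ℕ} (h : k < n) (i : Fin n) :
    (M *ᵥ unitVec n k) i = M i ⟨k, h⟩ := by
  rw [unitVec_eq_single h, mulVec_single_one]; rfl

lemma dotProduct_unitVec (v : Fin n → ℤ) {k : ℕ} (h : k < n) :
    v ⬝ᵥ unitVec n k = v ⟨k, h⟩ := by
  rw [unitVec_eq_single h, dotProduct_single_one]

lemma Amat_eq : Amat n = 1 + vecMulVec (unitVec n 0) (unitVec n 1) := by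
  ext i j
  simp only [Amat, of_apply, Matrix.add_apply, Matrix.one_apply, vecMulVec_apply, unitVec,
    Fin.ext_iff]
  split_ifs <;> first | rfl | omega

lemma Bmat_mulVec_succ {k : ℕ} (h : k + 1 < n) :
    Bmat n *ᵥ unitVec n (k + 1) = unitVec n k := by
  ext i
  rw [mulVec_unitVec _ h]
  simp [Bmat, unitVec, eq_comm]

lemma Bmat_mulVec_zero (h : 2 ≤ n) :
    Bmat n *ᵥ unitVec n 0 = (-1 : ℤ) ^ (n - 1) • unitVec n (n - 1) := by
  ext i
  rw [mulVec_unitVec _ (by omega)]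
  simp [Bmat, unitVec]

lemma vecMul_Bmat (h : 2 ≤ n) (w : Fin n → ℤ) (j : Fin n) :
    (w ᵥ* Bmat n) j = if (j : ℕ) = 0 then (-1 : ℤ) ^ (n - 1) * w ⟨n - 1, by omega⟩
      else w ⟨j - 1, by omega⟩ := by
  rw [vecMul, dotProduct]
  split_ifs with hj
  · rw [Finset.sum_eq_single ⟨n - 1, by omega⟩]
    · simp [Bmat, hj]; ring
    · intro b _ hb
      have : (b : ℕ) ≠ n - 1 := fun h => hb (Fin.ext h)
      simp [Bmat, hj, this]
    · simp
  · rw [Finset.sum_eq_single ⟨j - 1, by omega⟩]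
    · have : (j : ℕ) = j - 1 + 1 := by omega
      simp [Bmat, ← this]
    · intro b _ hb
      have : (j : ℕ) ≠ b + 1 := fun h => hb (Fin.ext (by simp [h]))
      simp [Bmat, hj, this]
    · simp

lemma unitVec_vecMul_Bmat {k : ℕ} (h : k + 1 < n) :
    unitVec n k ᵥ* Bmat n = unitVec n (k + 1) := by
  ext j
  rw [vecMul_Bmat (by omega)]
  simp only [unitVec]
  split_ifs <;> first | rfl | omega

lemma unitVec_dotProduct_unitVec {j k : ℕ} (h : j ≠ k) : unitVec n j ⬝ᵥ unitVec n k = 0 := by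
  refine Finset.sum_eq_zero fun i _ => ?_
  simp only [unitVec]
  split_ifs <;> first | rfl | omega

end UnitVec

section Sweeps

variable {n : ℕ} {A B : SpecialLinearGroup (Fin n) ℤ}

lemma pow_conj_one_add_vecMulVec (hB : B.1 = Bmat n) {g : SpecialLinearGroup (Fin n) ℤ} {x : ℤ}
    (hg : g.1 = 1 + vecMulVec (unitVec n 0) (x • unitVec n 1)) {j : ℕ} (hj : j + 1 < n) :
    ((B ^ j)⁻¹ * g * B ^ j).1 = 1 + vecMulVec (unitVec n j) (x • unitVec n (j + 1)) := by
  induction j with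
  | zero => simpa using! hg
  | succ j ih =>
    have h1 : (B⁻¹).1 *ᵥ unitVec n j = unitVec n (j + 1) :=
      inv_mulVec_of_mulVec_eq (by rw [hB, Bmat_mulVec_succ (by omega)])
    have h2 : (x • unitVec n (j + 2)) ᵥ* (B⁻¹).1 = x • unitVec n (j + 1) :=
      vecMul_inv_of_vecMul_eq (by rw [hB, smul_vecMul, unitVec_vecMul_Bmat hj])
    have h3 : (B ^ (j + 1))⁻¹ * g * B ^ (j + 1) = B⁻¹ * ((B ^ j)⁻¹ * g * B ^ j) * B⁻¹⁻¹ := by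
      group
    rw [h3]
    have h4 := conj_one_add_vecMulVec B⁻¹ (unitVec n j) (x • unitVec n (j + 2))
    rw [h1, h2, ← ih (by omega)] at h4
    exact h4

lemma left_inv_pow (hA : A.1 = Amat n) (a : ℕ) :
    (A⁻¹ ^ a).1 = 1 + vecMulVec (unitVec n 0) ((-a : ℤ) • unitVec n 1) := by
  have h0 : ∀ x : ℤ, (x • unitVec n 1) ⬝ᵥ unitVec n 0 = 0 := fun x => by
    rw [smul_dotProduct, unitVec_dotProduct_unitVec (by simp), smul_zero]
  induction a with
  | zero => simp
  | succ a ih =>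
    have h : (A⁻¹ ^ (a + 1)).1 * A.1 = (A⁻¹ ^ a).1 :=
      congrArg Subtype.val (by group : A⁻¹ ^ (a + 1) * A = A⁻¹ ^ a)
    have h' : A.1 * (1 + vecMulVec (unitVec n 0) (-unitVec n 1)) = 1 := by
      rw [hA, Amat_eq, one_add_vecMulVec_mul (by simpa using h0 1), vecMulVec_neg]
      simp
    calc _ = (A⁻¹ ^ (a + 1)).1 * (A.1 * (1 + vecMulVec (unitVec n 0) (-unitVec n 1))) := by
          rw [h', mul_one]
      _ = _ := by
        rw [← mul_assoc, h, ih, one_add_vecMulVec_mul (h0 _), add_assoc, ← vecMulVec_add]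
        congr 2
        push_cast
        module

lemma HasWord.inv_pow_left (a : ℕ) : HasWord A B a (A⁻¹ ^ a).1 := by
  refine ⟨List.replicate a A⁻¹, by simp, fun x hx => ?_, by rw [List.prod_replicate]⟩
  simp [List.eq_of_mem_replicate hx]

/-- An ascending product of elementary matrices, spreading `unitVec n 1` to all later positions. -/
lemma exists_ascending_sweep (hA : A.1 = Amat n) (hB : B.1 = Bmat n) {k : ℕ} (hk : k + 2 ≤ n) :
    ∃ g : SpecialLinearGroup (Fin n) ℤ, HasWord A B (2 * k) (g * (B ^ k)⁻¹).1 ∧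
      g.1 *ᵥ unitVec n 0 = unitVec n 0 ∧
      unitVec n 1 ᵥ* g.1 = fun i : Fin n => if 1 ≤ (i : ℕ) ∧ (i : ℕ) ≤ k + 1 then 1 else 0 := by
  induction k with
  | zero =>
    refine ⟨1, by simpa using! HasWord.one, one_mulVec _, (vecMul_one _).trans ?_⟩
    ext i
    simp only [unitVec]
    split_ifs <;> first | rfl | omega
  | succ k ih =>
    obtain ⟨g, hg, hg0, hg1⟩ := ih (by omega)
    have hE := pow_conj_one_add_vecMulVec (x := 1) hB (g := A) (by rw [one_smul, hA, Amat_eq])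
      (show k + 1 + 1 < n by omega)
    refine ⟨g * ((B ^ (k + 1))⁻¹ * A * B ^ (k + 1)), ?_, ?_, ?_⟩
    · have : g * ((B ^ (k + 1))⁻¹ * A * B ^ (k + 1)) * (B ^ (k + 1))⁻¹ =
          g * (B ^ k)⁻¹ * (B⁻¹ * A) := by group
      rw [this]
      exact hg.mul (HasWord.right.inv.mul HasWord.left)
    · refine (mulVec_mulVec _ _ _).symm.trans ?_
      rw [hE, add_mulVec, one_mulVec, vecMulVec_mulVec, one_smul,
        unitVec_dotProduct_unitVec (by omega)]
      simpa using! hg0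
    · refine (vecMul_vecMul _ _ _).symm.trans ?_
      rw [hE, hg1, vecMul_add, vecMul_one, vecMul_vecMulVec, one_smul,
        dotProduct_unitVec _ (by omega : k + 1 < n)]
      ext i
      simp only [unitVec, Pi.add_apply, Pi.smul_apply]
      split_ifs <;> first | omega | simp

/-- A descending product of elementary matrices, adding to each entry a bounded multiple of the
previous one. -/
lemma exists_descending_sweep (hA : A.1 = Amat n) (hB : B.1 = Bmat n) (c : ℕ → ℕ)
    (hc : ∀ j, c j ≤ 2) {k : ℕ} (hk : k + 2 ≤ n) :
    ∃ g : SpecialLinearGroup (Fin n) ℤ, HasWord A B (3 * k) (B ^ k * g).1 ∧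
      g.1 *ᵥ unitVec n 0 = unitVec n 0 ∧
      ∀ (u : Fin n → ℤ) (i : Fin n), (u ᵥ* g.1) i =
        u i - if 2 ≤ (i : ℕ) ∧ (i : ℕ) ≤ k + 1 then c i * u ⟨i - 1, by omega⟩ else 0 := by
  induction k with
  | zero =>
    refine ⟨1, by simpa using! HasWord.one, one_mulVec _, fun u i => ?_⟩
    rw [if_neg (by omega), sub_zero]
    exact congrFun (vecMul_one u) i
  | succ k ih =>
    obtain ⟨g, hg, hg0, hg1⟩ := ih (by omega)
    have hE := pow_conj_one_add_vecMulVec hB (left_inv_pow hA (c (k + 2)))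
      (show k + 1 + 1 < n by omega)
    refine ⟨((B ^ (k + 1))⁻¹ * A⁻¹ ^ c (k + 2) * B ^ (k + 1)) * g, ?_, ?_, fun u i => ?_⟩
    · have : B ^ (k + 1) * (((B ^ (k + 1))⁻¹ * A⁻¹ ^ c (k + 2) * B ^ (k + 1)) * g) =
          A⁻¹ ^ c (k + 2) * (B * (B ^ k * g)) := by group
      rw [this]
      have hck := hc (k + 2)
      exact ((HasWord.inv_pow_left _).mul (HasWord.right.mul hg)).mono (by omega)
    · refine (mulVec_mulVec _ _ _).symm.trans ?_
      rw [hg0, hE, add_mulVec, one_mulVec, vecMulVec_mulVec, smul_dotProduct,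
        unitVec_dotProduct_unitVec (by omega)]
      simp
    · refine (congrFun (vecMul_vecMul _ _ _).symm i).trans ?_
      rw [hg1, hE, vecMul_add, vecMul_one, vecMul_vecMulVec,
        dotProduct_unitVec _ (by omega : k + 1 < n)]
      simp only [unitVec, Pi.add_apply, Pi.smul_apply, smul_eq_mul]
      by_cases hi : (i : ℕ) = k + 2
      · simp [hi]
        ring
      · have h1 : ((i : ℕ) - 1 = k + 2) ↔ (i : ℕ) = k + 3 := by omega
        have h2 : ((i : ℕ) = k + 1 + 1) ↔ False := iff_false_intro hi
        have h3 : ((i : ℕ) ≤ k + 1 + 1) ↔ (i : ℕ) ≤ k + 1 := by omega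
        by_cases h4 : 2 ≤ (i : ℕ) ∧ (i : ℕ) ≤ k + 1
        · have : (i : ℕ) ≠ k + 3 := by omega
          simp [h1, h2, h3, h4, this]
        · simp [h2, h3, h4]

lemma hasWord_digits (hn : 3 ≤ n) (hA : A.1 = Amat n) (hB : B.1 = Bmat n) (d : Fin n → ℤ)
    (hd0 : ∀ i : Fin n, (i : ℕ) = 0 → d i = 0) (hd : ∀ i, |d i| ≤ 1) :
    HasWord A B (10 * n) (1 + vecMulVec (unitVec n 0) d) := by
  obtain ⟨g, hg, hg0, hg1⟩ := exists_ascending_sweep hA hB (k := n - 2) (by omega)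
  obtain ⟨h, hh, hh0, hh1⟩ := exists_descending_sweep hA hB
    (fun j => if hj : j < n then (1 - d ⟨j, hj⟩).toNat else 0)
    (fun j => by
      split_ifs with hj
      · have := abs_le.1 (hd ⟨j, hj⟩); omega
      · omega) (k := n - 2) (by omega)
  have hgh : HasWord A B (5 * (n - 2)) (g * h).1 := by
    have : g * h = g * (B ^ (n - 2))⁻¹ * (B ^ (n - 2) * h) := by group
    rw [this]
    exact (hg.mul hh).mono (by omega)
  have hw0 : (g * h).1 *ᵥ unitVec n 0 = unitVec n 0 := by
    refine (mulVec_mulVec _ _ _).symm.trans ?_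
    rw [hh0, hg0]
  have hw1 : unitVec n 1 ᵥ* (g * h).1 = d + (1 - d ⟨1, by omega⟩) • unitVec n 1 := by
    refine (vecMul_vecMul _ _ _).symm.trans ?_
    ext i
    rw [hh1, hg1]
    simp only [unitVec, Pi.add_apply, Pi.smul_apply, smul_eq_mul]
    rcases Nat.lt_or_ge i 2 with hi | hi
    · obtain hi | hi : (i : ℕ) = 0 ∨ (i : ℕ) = 1 := by omega
      · simp [hi, hd0 i hi]
      · have h1 : i = ⟨1, by omega⟩ := Fin.ext hi
        rw [← h1]
        simp [hi]
    · have := abs_le.1 (hd i)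
      have h1 : ((1 - d i).toNat : ℤ) = 1 - d i := Int.toNat_of_nonneg (by omega)
      have h2 : 1 ≤ (i : ℕ) ∧ (i : ℕ) ≤ n - 2 + 1 := by omega
      have h3 : 2 ≤ (i : ℕ) ∧ (i : ℕ) ≤ n - 2 + 1 := by omega
      have h4 : 1 ≤ (i : ℕ) - 1 ∧ (i : ℕ) - 1 ≤ n - 2 + 1 := by omega
      have h5 : (i : ℕ) ≠ 1 := by omega
      rw [if_pos h2, if_pos h3, if_neg h5, if_pos h4, dif_pos i.2, h1]
      ring
  have hA1 : HasWord A B 1 (1 + vecMulVec (unitVec n 0) (unitVec n 1)) := by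
    rw [← Amat_eq, ← hA]; exact HasWord.left
  have h01 : unitVec n 1 ⬝ᵥ unitVec n 0 = 0 := unitVec_dotProduct_unitVec (by simp)
  have hmain := hgh.inv.conj hA1 (inv_mulVec_of_mulVec_eq hw0) (vecMul_inv_of_vecMul_eq hw1)
  have hd0' : d ⬝ᵥ unitVec n 0 = 0 := by
    rw [dotProduct_unitVec _ (by omega)]; exact hd0 _ rfl
  have hpow : HasWord A B 2 (1 + vecMulVec (unitVec n 0)
      ((-(1 - d ⟨1, by omega⟩)) • unitVec n 1)) := by
    have := abs_le.1 (hd ⟨1, by omega⟩)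
    have h1 : ((1 - d ⟨1, by omega⟩).toNat : ℤ) = 1 - d ⟨1, by omega⟩ :=
      Int.toNat_of_nonneg (by omega)
    rw [← h1, ← left_inv_pow hA]
    exact (HasWord.inv_pow_left _).mono (by omega)
  have := hmain.add_right hpow (by
    rw [add_dotProduct, hd0', smul_dotProduct, h01, smul_zero, add_zero])
  rw [neg_smul, add_neg_cancel_right] at this
  exact this.mono (by omega)

end Sweeps

/-- The sequence `2, 3, 7, 18, …` of Lucas numbers of even index. -/
def evenLucas : ℕ → ℤ
  | 0 => 2
  | 1 => 3
  | k + 2 => 3 * evenLucas (k + 1) - evenLucas k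

lemma evenLucas_pos_and_le (k : ℕ) : 0 < evenLucas k ∧ evenLucas k ≤ evenLucas (k + 1) := by
  induction k with
  | zero => simp [evenLucas]
  | succ k ih => simp only [evenLucas]; omega

lemma evenLucas_succ_le (k : ℕ) : evenLucas (k + 1) ≤ 3 * evenLucas k := by
  cases k with
  | zero => simp [evenLucas]
  | succ k => have := (evenLucas_pos_and_le k).1; simp only [evenLucas]; omega

lemma two_pow_le_evenLucas (k : ℕ) : 7 * 2 ^ k ≤ evenLucas (k + 2) := by
  induction k with
  | zero => simp [evenLucas]
  | succ k ih =>
    have := (evenLucas_pos_and_le (k + 1)).2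
    rw [evenLucas, pow_succ]
    simp only [show k + 1 + 1 = k + 2 from rfl] at *
    omega

lemma exists_evenLucas_digits {m : ℕ} (hm : 2 ≤ m) {x : ℤ} (hx : 2 * |x| ≤ evenLucas m) :
    ∃ d : ℕ → ℤ, (∀ k, |d k| ≤ 1) ∧ ∑ k ∈ Finset.range m, evenLucas k * d k = x := by
  induction m, hm using Nat.le_induction generalizing x with
  | base =>
    have h7 : evenLucas 2 = 7 := by simp [evenLucas]
    have hx3 := abs_le.1 (show |x| ≤ 3 by omega)
    obtain ⟨a, b, ha, hb, hab⟩ : ∃ a b : ℤ, |a| ≤ 1 ∧ |b| ≤ 1 ∧ 2 * a + 3 * b = x := by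
      obtain ⟨h1, h2⟩ := hx3
      interval_cases x
      exacts [⟨0, -1, by simp⟩, ⟨-1, 0, by simp⟩, ⟨1, -1, by simp⟩, ⟨0, 0, by simp⟩,
        ⟨-1, 1, by simp⟩, ⟨1, 0, by simp⟩, ⟨0, 1, by simp⟩]
    refine ⟨fun k => if k = 0 then a else b, fun k => ?_, ?_⟩
    · dsimp only
      split_ifs <;> assumption
    · simpa [Finset.sum_range_succ, evenLucas] using hab
  | succ m hm ih =>
    have h3 := evenLucas_succ_le m
    obtain ⟨e, he, hxe⟩ : ∃ e : ℤ, |e| ≤ 1 ∧ 2 * |x - evenLucas m * e| ≤ evenLucas m := by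
      have h1 : -evenLucas (m + 1) ≤ 2 * x ∧ 2 * x ≤ evenLucas (m + 1) := by
        have := neg_abs_le x; have := le_abs_self x; omega
      have key : ∀ y : ℤ, -evenLucas m ≤ 2 * y → 2 * y ≤ evenLucas m →
          2 * |y| ≤ evenLucas m := fun y h h' => by
        rcases abs_cases y with ⟨h, _⟩ | ⟨h, _⟩ <;> omega
      rcases lt_or_ge (2 * x) (-evenLucas m) with h | h
      · exact ⟨-1, by simp, key _ (by omega) (by omega)⟩
      · rcases le_or_gt (2 * x) (evenLucas m) with h' | h'
        · exact ⟨0, by simp, key _ (by omega) (by omega)⟩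
        · exact ⟨1, by simp, key _ (by omega) (by omega)⟩
    obtain ⟨d, hd, hds⟩ := ih hxe
    refine ⟨fun k => if k = m then e else d k, fun k => ?_, ?_⟩
    · dsimp only
      split_ifs
      exacts [he, hd k]
    · have : ∑ k ∈ Finset.range m, evenLucas k * (if k = m then e else d k) =
          ∑ k ∈ Finset.range m, evenLucas k * d k :=
        Finset.sum_congr rfl fun k hk => by rw [if_neg (Finset.mem_range.1 hk).ne]
      rw [Finset.sum_range_succ, this, hds]
      simp

section Rows

variable {n : ℕ} {A B : SpecialLinearGroup (Fin n) ℤ}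

lemma hasWord_lower (hn : 3 ≤ n) (hA : A.1 = Amat n) (hB : B.1 = Bmat n) :
    HasWord A B (24 * n) (1 + vecMulVec (unitVec n 1) (unitVec n 0)) := by
  have h1 : HasWord A B (10 * n) (1 + vecMulVec (unitVec n 0) (unitVec n (n - 2))) := by
    refine hasWord_digits hn hA hB _ (fun i hi => ?_) (fun i => ?_)
    · rw [unitVec, if_neg (by omega)]
    · simp only [unitVec]
      split_ifs <;> simp
  have h2 := HasWord.right.inv.conj (v := unitVec n (n - 1)) (q := unitVec n 1) h1
    (inv_mulVec_of_mulVec_eq (by rw [hB, Bmat_mulVec_succ (by omega)]))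
    (vecMul_inv_of_vecMul_eq (by
      rw [hB, unitVec_vecMul_Bmat (by omega), show n - 2 + 1 = n - 1 by omega]))
  have hA1 : HasWord A B 1 (1 + vecMulVec (unitVec n 0) (unitVec n 1)) := by
    rw [← Amat_eq, ← hA]; exact HasWord.left
  have h3 := HasWord.right.conj (v := unitVec n 0) hA1
    (by rw [hB, Bmat_mulVec_zero (by omega)]) (by rw [hB, unitVec_vecMul_Bmat (by omega)])
  have h01 : unitVec n 0 ⬝ᵥ unitVec n 1 = 0 := unitVec_dotProduct_unitVec (by simp)
  have h0n : unitVec n 0 ⬝ᵥ unitVec n (n - 1) = 0 := unitVec_dotProduct_unitVec (by omega)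
  have hnn : unitVec n (n - 1) ⬝ᵥ unitVec n (n - 1) = 1 := by
    rw [dotProduct_unitVec _ (by omega)]
    simp [unitVec]
  obtain ⟨s, hs⟩ : ∃ s : ℤ, s = (-1) ^ (n - 1) := ⟨_, rfl⟩
  have hs1 : s = 1 ∨ s = -1 := hs ▸ neg_one_pow_eq_or ℤ (n - 1)
  rw [← hs] at h3
  obtain ⟨g, hg⟩ := h2.exists_eq
  have h4 := HasWord.conj (g := g) (v := unitVec n 0)
    (q := s • unitVec n (n - 1) + s • unitVec n 1) (hg ▸ h2) h3
    (by
      rw [hg, mulVec_smul, add_mulVec, one_mulVec, vecMulVec_mulVec, hnn]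
      simp)
    (by rw [hg, vecMul_add, vecMul_one, vecMul_vecMulVec, h01, zero_smul, add_zero])
  have h5 := h4.add_left (h3.neg (by rw [dotProduct_smul, h0n, smul_zero]))
    (by rw [dotProduct_neg, dotProduct_smul, h0n, smul_zero, neg_zero])
  rw [add_neg_cancel_comm] at h5
  rcases hs1 with rfl | rfl
  · rw [one_smul] at h5
    exact h5.mono (by omega)
  · rw [neg_smul, one_smul] at h5
    have h6 := h5.neg (by rw [dotProduct_neg, h01, neg_zero])
    rw [neg_neg] at h6
    exact h6.mono (by omega)

lemma exists_hyperbolic (hn : 3 ≤ n) (hA : A.1 = Amat n) (hB : B.1 = Bmat n) :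
    ∃ g : SpecialLinearGroup (Fin n) ℤ, HasWord A B (25 * n) g.1 ∧
      g.1 *ᵥ unitVec n 0 + (g⁻¹).1 *ᵥ unitVec n 0 = (3 : ℤ) • unitVec n 0 ∧
      ∀ v : Fin n → ℤ, (∀ i : Fin n, (i : ℕ) ≤ 1 → v i = 0) → v ᵥ* g.1 = v := by
  have hF := hasWord_lower hn hA hB
  obtain ⟨F, hFe⟩ := hF.exists_eq
  rw [← hFe] at hF
  have h01 : unitVec n 0 ⬝ᵥ unitVec n 1 = 0 := unitVec_dotProduct_unitVec (by simp)
  have h10 : unitVec n 1 ⬝ᵥ unitVec n 0 = 0 := unitVec_dotProduct_unitVec (by simp)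
  have h00 : unitVec n 0 ⬝ᵥ unitVec n 0 = 1 := by
    rw [dotProduct_unitVec _ (by omega)]
    simp [unitVec]
  have h11 : unitVec n 1 ⬝ᵥ unitVec n 1 = 1 := by
    rw [dotProduct_unitVec _ (by omega)]
    simp [unitVec]
  have hg : ∀ p, (A * F).1 *ᵥ p = A.1 *ᵥ F.1 *ᵥ p := fun p => (mulVec_mulVec _ _ _).symm
  have hF0 : F.1 *ᵥ unitVec n 0 = unitVec n 0 + unitVec n 1 := by
    rw [hFe, add_mulVec, one_mulVec, vecMulVec_mulVec, h00]
    simp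
  have hF1 : F.1 *ᵥ unitVec n 1 = unitVec n 1 := by
    rw [hFe, add_mulVec, one_mulVec, vecMulVec_mulVec, h01]
    simp
  have hA0 : A.1 *ᵥ unitVec n 0 = unitVec n 0 := by
    rw [hA, Amat_eq, add_mulVec, one_mulVec, vecMulVec_mulVec, h10]
    simp
  have hA1 : A.1 *ᵥ unitVec n 1 = unitVec n 1 + unitVec n 0 := by
    rw [hA, Amat_eq, add_mulVec, one_mulVec, vecMulVec_mulVec, h11]
    simp
  refine ⟨A * F, (HasWord.left.mul hF).mono (by omega), ?_, fun v hv => ?_⟩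
  · rw [inv_mulVec_of_mulVec_eq (p := unitVec n 0 - unitVec n 1) (q := unitVec n 0)
      (by rw [hg, mulVec_sub, hF0, hF1, add_sub_cancel_right, hA0]), hg, hF0, mulVec_add, hA0, hA1]
    module
  · have h0 : v ⬝ᵥ unitVec n 0 = 0 := by
      rw [dotProduct_unitVec _ (by omega)]
      exact hv _ (by simp)
    have h1 : v ⬝ᵥ unitVec n 1 = 0 := by
      rw [dotProduct_unitVec _ (by omega)]
      exact hv _ (by simp)
    refine (vecMul_vecMul _ _ _).symm.trans ?_
    rw [hA, Amat_eq, vecMul_add, vecMul_one, vecMul_vecMulVec, h0, zero_smul, add_zero, hFe,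
      vecMul_add, vecMul_one, vecMul_vecMulVec, h1, zero_smul, add_zero]

lemma pow_succ_mulVec (g : SpecialLinearGroup (Fin n) ℤ) (k : ℕ) (p : Fin n → ℤ) :
    (g ^ (k + 1)).1 *ᵥ p = g.1 *ᵥ (g ^ k).1 *ᵥ p := by
  rw [pow_succ']
  exact (mulVec_mulVec _ _ _).symm

lemma pow_mulVec_add_inv_pow_mulVec {g : SpecialLinearGroup (Fin n) ℤ} {p : Fin n → ℤ}
    (h : g.1 *ᵥ p + (g⁻¹).1 *ᵥ p = (3 : ℤ) • p) (k : ℕ) :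
    (g ^ k).1 *ᵥ p + (g⁻¹ ^ k).1 *ᵥ p = evenLucas k • p := by
  induction k using Nat.twoStepInduction with
  | zero =>
    have : (1 : SpecialLinearGroup (Fin n) ℤ).1 *ᵥ p = p := one_mulVec p
    rw [pow_zero, pow_zero, this, evenLucas, two_smul]
  | one => rw [pow_one, pow_one, h, evenLucas]
  | more k ih0 ih1 =>
    have e1 : g.1 *ᵥ (evenLucas (k + 1) • p) =
        (g ^ (k + 2)).1 *ᵥ p + (g⁻¹ ^ k).1 *ᵥ p := by
      rw [← ih1, mulVec_add, ← pow_succ_mulVec, pow_succ_mulVec g⁻¹, mulVec_mulVec _ g.1,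
        SpecialLinearGroup.mul_inv_val, one_mulVec]
    have e2 : (g⁻¹).1 *ᵥ (evenLucas (k + 1) • p) =
        (g ^ k).1 *ᵥ p + (g⁻¹ ^ (k + 2)).1 *ᵥ p := by
      rw [← ih1, mulVec_add, ← pow_succ_mulVec, pow_succ_mulVec g, mulVec_mulVec _ (g⁻¹).1,
        SpecialLinearGroup.inv_mul_val, one_mulVec]
    calc _ = (g.1 *ᵥ (evenLucas (k + 1) • p) + (g⁻¹).1 *ᵥ (evenLucas (k + 1) • p)) -
          ((g ^ k).1 *ᵥ p + (g⁻¹ ^ k).1 *ᵥ p) := by rw [e1, e2]; abel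
      _ = _ := by
        rw [ih0, mulVec_smul, mulVec_smul, ← smul_add, h, evenLucas]
        module

lemma vecMul_pow_of_vecMul_eq {g : SpecialLinearGroup (Fin n) ℤ} {v : Fin n → ℤ}
    (h : v ᵥ* g.1 = v) (k : ℕ) : v ᵥ* (g ^ k).1 = v := by
  induction k with
  | zero => exact vecMul_one v
  | succ k ih =>
    rw [pow_succ]
    refine (vecMul_vecMul _ _ _).symm.trans ?_
    rw [ih, h]

lemma HasWord.sum_pow {L L' : ℕ} {g : SpecialLinearGroup (Fin n) ℤ} {p : Fin n → ℤ}
    (hg : HasWord A B L g.1) {d : ℕ → Fin n → ℤ}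
    (hd : ∀ k, HasWord A B L' (1 + vecMulVec p (d k))) (hfix : ∀ k, d k ᵥ* g.1 = d k)
    (hdp : ∀ k, d k ⬝ᵥ p = 0) (m : ℕ) :
    HasWord A B (m * (L' + 2 * L))
      (1 + ∑ k ∈ Finset.range m, vecMulVec ((g ^ k).1 *ᵥ p) (d k)) := by
  induction m generalizing d with
  | zero => simpa using HasWord.one
  | succ m ih =>
    have h1 := (hd 0).mul ((hg.mul (ih (fun k => hd (k + 1)) (fun k => hfix (k + 1))
      (fun k => hdp (k + 1)))).mul hg.inv)
    have h2 : g.1 * (1 + ∑ k ∈ Finset.range m, vecMulVec ((g ^ k).1 *ᵥ p) (d (k + 1))) *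
        (g⁻¹).1 = 1 + ∑ k ∈ Finset.range m, vecMulVec ((g ^ (k + 1)).1 *ᵥ p) (d (k + 1)) := by
      rw [mul_add, add_mul, mul_one, SpecialLinearGroup.mul_inv_val, Finset.mul_sum,
        Finset.sum_mul]
      congr 1
      refine Finset.sum_congr rfl fun k _ => ?_
      rw [mul_vecMulVec, vecMulVec_mul, ← pow_succ_mulVec,
        vecMul_inv_of_vecMul_eq (hfix (k + 1))]
    have h3 : vecMulVec p (d 0) *
        ∑ k ∈ Finset.range m, vecMulVec ((g ^ (k + 1)).1 *ᵥ p) (d (k + 1)) = 0 := by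
      rw [Finset.mul_sum]
      refine Finset.sum_eq_zero fun k _ => ?_
      rw [vecMulVec_mul_vecMulVec, dotProduct_mulVec, vecMul_pow_of_vecMul_eq (hfix 0), hdp]
      simp
    rw [h2, add_mul, one_mul, mul_add (vecMulVec p (d 0)), h3, mul_one, add_zero] at h1
    have h4 := h1.mono (show _ ≤ (m + 1) * (L' + 2 * L) by ring_nf; omega)
    rwa [Finset.sum_range_succ', pow_zero,
      show (1 : SpecialLinearGroup (Fin n) ℤ).1 *ᵥ p = p from one_mulVec p,
      add_comm (Finset.sum _ _), ← add_assoc, add_right_comm]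

lemma hasWord_firstRow_of_two_le (hn : 3 ≤ n) (hA : A.1 = Amat n) (hB : B.1 = Bmat n) {m : ℕ}
    (hm : 2 ≤ m) {v : Fin n → ℤ} (hv0 : ∀ i : Fin n, (i : ℕ) ≤ 1 → v i = 0)
    (hv : ∀ i, 2 * |v i| ≤ evenLucas m) :
    HasWord A B (120 * n * m) (1 + vecMulVec (unitVec n 0) v) := by
  obtain ⟨g, hg, hg3, hgv⟩ := exists_hyperbolic hn hA hB
  choose c hc hcs using fun i => exists_evenLucas_digits hm (hv i)
  let d : ℕ → Fin n → ℤ := fun k i => if (i : ℕ) ≤ 1 then 0 else c i k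
  have hd0 : ∀ k, ∀ i : Fin n, (i : ℕ) ≤ 1 → d k i = 0 := fun k i hi => if_pos hi
  have hdw : ∀ k, HasWord A B (10 * n) (1 + vecMulVec (unitVec n 0) (d k)) := fun k =>
    hasWord_digits hn hA hB _ (fun i hi => hd0 k i (by omega)) fun i => by
      simp only [d]
      split_ifs
      · simp
      · exact hc i k
  have hdp : ∀ k, d k ⬝ᵥ unitVec n 0 = 0 := fun k => by
    rw [dotProduct_unitVec _ (by omega)]
    exact hd0 k _ (by simp)
  have hfix : ∀ k, d k ᵥ* g.1 = d k := fun k => hgv _ (hd0 k)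
  have hfix' : ∀ k, d k ᵥ* (g⁻¹).1 = d k := fun k => vecMul_inv_of_vecMul_eq (hfix k)
  have h := (hg.sum_pow hdw hfix hdp m).mul (hg.inv.sum_pow hdw hfix' hdp m)
  have hcross : (∑ k ∈ Finset.range m, vecMulVec ((g ^ k).1 *ᵥ unitVec n 0) (d k)) *
      ∑ k ∈ Finset.range m, vecMulVec ((g⁻¹ ^ k).1 *ᵥ unitVec n 0) (d k) = 0 := by
    rw [Finset.sum_mul_sum]
    refine Finset.sum_eq_zero fun j _ => Finset.sum_eq_zero fun k _ => ?_
    rw [vecMulVec_mul_vecMulVec, dotProduct_mulVec, vecMul_pow_of_vecMul_eq (hfix' j), hdp]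
    simp
  have hsum : ∑ k ∈ Finset.range m, evenLucas k • d k = v := by
    ext i
    rw [Finset.sum_apply]
    by_cases hi : (i : ℕ) ≤ 1
    · simp [d, hi, hv0 i hi]
    · simpa [d, hi] using hcs i
  rw [add_mul, one_mul, mul_add (Finset.sum _ _), hcross, mul_one, add_zero, add_assoc,
    add_comm (∑ k ∈ Finset.range m, vecMulVec ((g⁻¹ ^ k).1 *ᵥ unitVec n 0) (d k)),
    ← Finset.sum_add_distrib] at h
  have hterm : ∀ k, vecMulVec ((g ^ k).1 *ᵥ unitVec n 0) (d k) +
      vecMulVec ((g⁻¹ ^ k).1 *ᵥ unitVec n 0) (d k) =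
      vecMulVec (unitVec n 0) (evenLucas k • d k) := fun k => by
    rw [← add_vecMulVec, pow_mulVec_add_inv_pow_mulVec hg3, smul_vecMulVec, vecMulVec_smul]
  have hout : ∑ k ∈ Finset.range m, vecMulVec (unitVec n 0) (evenLucas k • d k) =
      vecMulVec (unitVec n 0) v := by
    rw [← hsum]
    ext i j
    simp [Matrix.sum_apply, vecMulVec_apply, Finset.mul_sum]
  simp only [hterm] at h
  rw [hout] at h
  exact h.mono (by ring_nf; omega)

lemma hasWord_firstRow (hn : 3 ≤ n) (hA : A.1 = Amat n) (hB : B.1 = Bmat n) {m : ℕ}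
    (hm : 2 ≤ m) {v : Fin n → ℤ} (hv0 : ∀ i : Fin n, (i : ℕ) = 0 → v i = 0)
    (hv : ∀ i, 2 * |v i| ≤ evenLucas m) :
    HasWord A B (360 * n * m + 49 * n) (1 + vecMulVec (unitVec n 0) v) := by
  have hpos := (evenLucas_pos_and_le m).1.le
  have h1 : HasWord A B (120 * n * m)
      (1 + vecMulVec (unitVec n 0) fun i : Fin n => if (i : ℕ) ≤ 1 then 0 else v i) :=
    hasWord_firstRow_of_two_le hn hA hB hm (fun i hi => if_pos hi) fun i => by
      split_ifs
      · simpa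
      · exact hv i
  have h2 : HasWord A B (120 * n * m)
      (1 + vecMulVec (unitVec n 0) (v ⟨1, by omega⟩ • unitVec n 2)) :=
    hasWord_firstRow_of_two_le hn hA hB hm
      (fun i hi => by simp [unitVec, show (i : ℕ) ≠ 2 by omega]) fun i => by
      simp only [Pi.smul_apply, unitVec]
      split_ifs
      · simpa using hv ⟨1, by omega⟩
      · simpa
  have h20 : ∀ x : ℤ, (x • unitVec n 2) ⬝ᵥ unitVec n 0 = 0 := fun x => by
    rw [smul_dotProduct, unitVec_dotProduct_unitVec (by simp), smul_zero]
  have h21 : ∀ x : ℤ, (x • unitVec n 2) ⬝ᵥ unitVec n 1 = 0 := fun x => by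
    rw [smul_dotProduct, unitVec_dotProduct_unitVec (by simp), smul_zero]
  have hF := hasWord_lower hn hA hB
  obtain ⟨F, hFe⟩ := hF.exists_eq
  rw [← hFe] at hF
  have h3 := hF.conj (v := v ⟨1, by omega⟩ • unitVec n 2) (q := unitVec n 0 + unitVec n 1) h2
    (by
      rw [hFe, add_mulVec, one_mulVec, vecMulVec_mulVec, dotProduct_unitVec _ (by omega)]
      simp [unitVec])
    (by rw [hFe, vecMul_add, vecMul_one, vecMul_vecMulVec, h21, zero_smul, add_zero])
  have h4 := h3.add_left (h2.neg (h20 _)) (by rw [dotProduct_neg, h20, neg_zero])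
  rw [add_neg_cancel_comm] at h4
  have h5 := HasWord.right.conj (v := v ⟨1, by omega⟩ • unitVec n 1) h4
    (by rw [hB, Bmat_mulVec_succ (by omega)])
    (by rw [hB, smul_vecMul, unitVec_vecMul_Bmat (by omega)])
  have h6 := h1.add_right h5 (by
    rw [dotProduct_unitVec _ (by omega)]
    simp)
  convert h6.mono (show _ ≤ 360 * n * m + 49 * n by ring_nf; omega) using 3
  ext i
  simp only [Pi.add_apply, Pi.smul_apply, unitVec, smul_eq_mul]
  obtain hi | hi | hi : (i : ℕ) = 0 ∨ (i : ℕ) = 1 ∨ 2 ≤ (i : ℕ) := by omega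
  · simp [hi, hv0 i hi]
  · have : i = ⟨1, by omega⟩ := Fin.ext hi
    rw [← this]
    simp [hi]
  · simp [show ¬ (i : ℕ) ≤ 1 by omega, show (i : ℕ) ≠ 1 by omega]

lemma hasWord_row_of_firstRow (hn : 3 ≤ n) (hB : B.1 = Bmat n) {C : ℕ} {c : ℤ}
    (h : ∀ v : Fin n → ℤ, (∀ i : Fin n, (i : ℕ) = 0 → v i = 0) → (∀ i, |v i| ≤ c) →
      HasWord A B C (1 + vecMulVec (unitVec n 0) v))
    {k r : ℕ} (hr : r + k + 1 = n) {w : Fin n → ℤ}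
    (hw0 : ∀ i : Fin n, (i : ℕ) = r → w i = 0) (hw : ∀ i, |w i| ≤ c) :
    HasWord A B (C + 2 * (k + 1)) (1 + vecMulVec (unitVec n r) w) := by
  have hwB : ∀ i, |(w ᵥ* Bmat n) i| ≤ c := fun i => by
    rw [vecMul_Bmat (by omega)]
    split_ifs
    · rw [abs_mul, abs_pow, abs_neg, abs_one, one_pow, one_mul]
      exact hw _
    · exact hw _
  induction k generalizing r w with
  | zero =>
    obtain rfl : r = n - 1 := by omega
    have h1 := h ((-1 : ℤ) ^ (n - 1) • (w ᵥ* Bmat n)) (fun i hi => by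
      rw [Pi.smul_apply, vecMul_Bmat (by omega), if_pos hi, hw0 _ rfl]
      simp) (fun i => by
      rw [Pi.smul_apply, smul_eq_mul, abs_mul, abs_pow, abs_neg, abs_one, one_pow, one_mul]
      exact hwB i)
    rw [vecMulVec_smul, ← smul_vecMulVec] at h1
    refine (HasWord.right.conj h1 ?_ (by rw [hB])).mono (by omega)
    rw [hB, mulVec_smul, Bmat_mulVec_zero (by omega), smul_smul, ← mul_pow]
    simp
  | succ k ih =>
    have h1 := ih (r := r + 1) (w := w ᵥ* Bmat n) (by omega) (fun i hi => by
      rw [vecMul_Bmat (by omega), if_neg (by omega)]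
      exact hw0 _ (by simp [hi])) hwB (fun i => by
      rw [vecMul_Bmat (by omega)]
      split_ifs
      · rw [abs_mul, abs_pow, abs_neg, abs_one, one_pow, one_mul]
        exact hwB _
      · exact hwB _)
    refine (HasWord.right.conj h1 ?_ (by rw [hB])).mono (by omega)
    rw [hB, Bmat_mulVec_succ (by omega)]

lemma IsRowMatrix.exists_eq_one_add {M : Matrix (Fin n) (Fin n) ℤ} (hM : IsRowMatrix M) :
    ∃ r : Fin n, M = 1 + vecMulVec (unitVec n r) fun j => if j = r then 0 else M r j := by
  obtain ⟨h1, r, hr⟩ := hM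
  refine ⟨r, ?_⟩
  ext i j
  rw [Matrix.add_apply, Matrix.one_apply, vecMulVec_apply]
  by_cases hij : i = j
  · subst hij
    by_cases hi : i = r
    · simp [hi, h1]
    · simp [hi, h1, unitVec, Fin.val_inj]
  · by_cases hi : i = r
    · subst hi
      simp [hij, unitVec, Ne.symm hij]
    · simp [hij, hi, hr i j hi hij, unitVec, Fin.val_inj]

lemma IsRowMatrix.hasWord (hn : 3 ≤ n) (hA : A.1 = Amat n) (hB : B.1 = Bmat n) {m : ℕ}
    (hm : 2 ≤ m) {M : Matrix (Fin n) (Fin n) ℤ} (hM : IsRowMatrix M)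
    (hent : ∀ i j, 2 * |M i j| ≤ evenLucas m) :
    HasWord A B (360 * n * m + 51 * n) M := by
  obtain ⟨r, hr⟩ := hM.exists_eq_one_add
  rw [hr]
  have hpos := (evenLucas_pos_and_le m).1.le
  refine (hasWord_row_of_firstRow (k := n - 1 - r) (c := evenLucas m / 2) hn hB
    (fun v hv0 hv => hasWord_firstRow hn hA hB hm hv0 fun i => ?_) (by omega)
    (fun i hi => ?_) fun i => ?_).mono (by omega)
  · have := hv i
    omega
  · simp [Fin.ext hi]
  · split_ifs
    · simp only [abs_zero]; omega
    · have := hent r i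
      omega

end Rows

section Transpose

variable {n : ℕ} {A B : SpecialLinearGroup (Fin n) ℤ}

/-- Reflection in the antidiagonal, an anti-automorphism of `SL_n(ℤ)`. -/
def antiTranspose (g : SpecialLinearGroup (Fin n) ℤ) : SpecialLinearGroup (Fin n) ℤ :=
  ⟨(g.1ᵀ).submatrix Fin.revPerm Fin.revPerm, by
    rw [det_submatrix_equiv_self, det_transpose]; exact g.2⟩

lemma antiTranspose_apply (g : SpecialLinearGroup (Fin n) ℤ) (i j : Fin n) :
    (antiTranspose g).1 i j = g.1 j.rev i.rev := rfl

lemma antiTranspose_antiTranspose (g : SpecialLinearGroup (Fin n) ℤ) :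
    antiTranspose (antiTranspose g) = g := by
  apply Subtype.ext
  ext i j
  rw [antiTranspose_apply, antiTranspose_apply, Fin.rev_rev, Fin.rev_rev]

lemma antiTranspose_mul (g h : SpecialLinearGroup (Fin n) ℤ) :
    antiTranspose (g * h) = antiTranspose h * antiTranspose g := by
  apply Subtype.ext
  change ((g.1 * h.1)ᵀ).submatrix _ _ =
    (h.1ᵀ).submatrix Fin.revPerm Fin.revPerm * (g.1ᵀ).submatrix Fin.revPerm Fin.revPerm
  rw [transpose_mul, submatrix_mul_equiv]

lemma antiTranspose_one : antiTranspose (1 : SpecialLinearGroup (Fin n) ℤ) = 1 := by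
  have := antiTranspose_mul (1 : SpecialLinearGroup (Fin n) ℤ) 1
  simpa using this

lemma antiTranspose_inv (g : SpecialLinearGroup (Fin n) ℤ) :
    antiTranspose g⁻¹ = (antiTranspose g)⁻¹ := by
  rw [eq_inv_iff_mul_eq_one, ← antiTranspose_mul, mul_inv_cancel, antiTranspose_one]

lemma antiTranspose_left (hn : 3 ≤ n) (hA : A.1 = Amat n) (hB : B.1 = Bmat n) :
    antiTranspose A = (B ^ (n - 2))⁻¹ * A * B ^ (n - 2) := by
  apply Subtype.ext
  rw [pow_conj_one_add_vecMulVec (x := 1) hB (by rw [hA, Amat_eq, one_smul]) (by omega)]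
  ext i j
  rw [antiTranspose_apply, hA, Amat_eq, one_smul]
  simp only [Matrix.add_apply, Matrix.one_apply, vecMulVec_apply, unitVec, Fin.val_rev,
    Fin.ext_iff]
  have := i.2
  have := j.2
  split_ifs <;> first | rfl | omega

lemma antiTranspose_right (hB : B.1 = Bmat n) : antiTranspose B = B := by
  apply Subtype.ext
  ext i j
  rw [antiTranspose_apply, hB]
  simp only [Bmat, of_apply, Fin.val_rev]
  have := i.2
  have := j.2
  split_ifs <;> first | rfl | omega

lemma HasWord.antiTranspose (hn : 3 ≤ n) (hA : A.1 = Amat n) (hB : B.1 = Bmat n) {L : ℕ}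
    {g : SpecialLinearGroup (Fin n) ℤ} (hg : HasWord A B L g.1) :
    HasWord A B (L + 2 * n) (antiTranspose g).1 := by
  obtain ⟨l, hl, hlx, hlp⟩ := hg
  obtain rfl : l.prod = g := Subtype.ext hlp
  have hb : ∀ k, HasWord A B k (B ^ k).1 := fun k =>
    ⟨List.replicate k B, by simp, fun x hx => by simp [List.eq_of_mem_replicate hx],
      by rw [List.prod_replicate]⟩
  have hletter : ∀ x, (x = A ∨ x = A⁻¹ ∨ x = B ∨ x = B⁻¹) →
      _root_.antiTranspose x = (B ^ (n - 2))⁻¹ * x * B ^ (n - 2) := by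
    rintro x (rfl | rfl | rfl | rfl)
    · exact antiTranspose_left hn hA hB
    · rw [antiTranspose_inv, antiTranspose_left hn hA hB]
      group
    · rw [antiTranspose_right hB]
      group
    · rw [antiTranspose_inv, antiTranspose_right hB]
      group
  have hprod : _root_.antiTranspose l.prod =
      (B ^ (n - 2))⁻¹ * l.reverse.prod * B ^ (n - 2) := by
    clear hl hlp
    induction l with
    | nil => simp [antiTranspose_one]
    | cons x l ih =>
      rw [List.prod_cons, antiTranspose_mul, ih fun y hy => hlx y (List.mem_cons_of_mem _ hy),
        hletter x (hlx x List.mem_cons_self), List.reverse_cons, List.prod_append,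
        List.prod_singleton]
      group
  have hrev : HasWord A B L l.reverse.prod.1 :=
    ⟨l.reverse, by simpa, fun x hx => hlx x (List.mem_reverse.1 hx), rfl⟩
  rw [hprod]
  exact (((hb _).inv.mul hrev).mul (hb _)).mono (by omega)

lemma IsColumnMatrix.isRowMatrix_antiTranspose {g : SpecialLinearGroup (Fin n) ℤ}
    (hg : IsColumnMatrix g.1) : IsRowMatrix (antiTranspose g).1 := by
  obtain ⟨h1, c, hc⟩ := hg
  refine ⟨fun i => h1 i.rev, c.rev, fun i j hi hij => hc _ _ ?_ ?_⟩
  · rintro rfl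
    exact hi (Fin.rev_rev i).symm
  · exact fun h => hij (Fin.rev_injective h).symm

end Transpose

/-- A row or column matrix in SL_n(ℤ) with entries in {−K+1, …, 0, …, K−1} is a product
of at most 1200·n·ln K + 400·n elements of {A, A⁻¹, B, B⁻¹}. -/
theorem rowOrColumnMatrix_short_word (n K : ℕ) (hn : 3 ≤ n) (hK : 1 ≤ K)
    (A B M : Matrix.SpecialLinearGroup (Fin n) ℤ)
    (hA : (A : Matrix (Fin n) (Fin n) ℤ) = Amat n)
    (hB : (B : Matrix (Fin n) (Fin n) ℤ) = Bmat n)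
    (hM : IsRowMatrix (M : Matrix (Fin n) (Fin n) ℤ) ∨
          IsColumnMatrix (M : Matrix (Fin n) (Fin n) ℤ))
    (hent : ∀ i j, |(M : Matrix (Fin n) (Fin n) ℤ) i j| ≤ (K : ℤ) - 1) :
    ∃ l : List (Matrix.SpecialLinearGroup (Fin n) ℤ),
      (l.length : ℝ) ≤ 1200 * n * Real.log K + 400 * n ∧
      (∀ x ∈ l, x = A ∨ x = A⁻¹ ∨ x = B ∨ x = B⁻¹) ∧
      l.prod = M := by
  have hK2 : 2 ≤ K := by
    have h1 : (M : Matrix (Fin n) (Fin n) ℤ) ⟨0, by omega⟩ ⟨0, by omega⟩ = 1 := by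
      rcases hM with h | h <;> exact h.1 _
    have := hent ⟨0, by omega⟩ ⟨0, by omega⟩
    rw [h1, abs_one] at this
    omega
  have hbound : ∀ i j, 2 * |(M : Matrix (Fin n) (Fin n) ℤ) i j| ≤
      evenLucas (Nat.log 2 K + 2) := fun i j => by
    have h1 := hent i j
    have h2 : (K : ℤ) < 2 ^ (Nat.log 2 K + 1) := by
      exact_mod_cast Nat.lt_pow_succ_log_self (by simp) K
    have h3 := two_pow_le_evenLucas (Nat.log 2 K)
    rw [pow_succ] at h2
    omega
  obtain ⟨l, hl, hlx, hlM⟩ :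
      HasWord A B (360 * n * (Nat.log 2 K + 2) + 53 * n) (M : Matrix (Fin n) (Fin n) ℤ) := by
    rcases hM with hM | hM
    · exact (hM.hasWord hn hA hB (by omega) hbound).mono (by omega)
    · have h := (hM.isRowMatrix_antiTranspose.hasWord hn hA hB (m := Nat.log 2 K + 2) (by omega)
        fun i j => hbound _ _).antiTranspose hn hA hB
      rw [antiTranspose_antiTranspose] at h
      exact h.mono (by omega)
  refine ⟨l, ?_, hlx, Subtype.ext hlM⟩
  have hlog1 : (1 : ℝ) ≤ Nat.log 2 K := by
    exact_mod_cast Nat.log_pos (by simp) hK2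
  have hlog : (Nat.log 2 K : ℝ) * 0.693 ≤ Real.log K := by
    have h1 : (2 : ℝ) ^ Nat.log 2 K ≤ K := by
      exact_mod_cast Nat.pow_log_le_self 2 (by omega)
    have h2 := Real.log_le_log (by positivity) h1
    rw [Real.log_pow] at h2
    nlinarith [Real.log_two_gt_d9]
  have hlen : (l.length : ℝ) ≤ 360 * n * (Nat.log 2 K + 2) + 53 * n := by exact_mod_cast hl
  have hn0 : (0 : ℝ) ≤ n := by positivity
  nlinarith
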